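/- Let ς, k, r, w be real numbers with ς > 0, k > 0 and 1 + k > ς, with w ≠ 0 a constant disturbance. Let p, v, a : ℝ → ℝ be differentiable functions satisfying p' = v, v' = a, a'(t) = ( −a(t) + k·( r − (p(t) + v(t) + a(t)) ) )/ς + w for all t ≥ 0. Then (p(t), v(t), a(t)) → (r + ς·w/k, 0, 0) as t → ∞; in particular the tracking error e = r − (p + v + a) converges to the nonzero value −ς·w/k, so the static (memory-less) policy fails to reject a constant disturbance. -/

import Mathlib

open Filter Topology

/-- A function with `f' ≤ -δ f` and `f ≥ 0` on the nonnegative half-line tends to zero. -/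
theorem tendsto_zero_of_hasDerivAt_le_neg_mul {f f' : ℝ → ℝ} {δ : ℝ} (hδ : 0 < δ)
    (hf : ∀ t, 0 ≤ t → HasDerivAt f (f' t) t) (hle : ∀ t, 0 ≤ t → f' t ≤ -δ * f t)
    (hnonneg : ∀ t, 0 ≤ t → 0 ≤ f t) : Tendsto f atTop (𝓝 0) := by
  have hderiv : ∀ t, 0 ≤ t → HasDerivAt (fun t => f t * Real.exp (δ * t))
      ((f' t + δ * f t) * Real.exp (δ * t)) t := fun t ht => by
    refine ((hf t ht).mul (((hasDerivAt_id t).const_mul δ).exp)).congr_deriv ?_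
    simp only [id]
    ring
  have hanti : AntitoneOn (fun t => f t * Real.exp (δ * t)) (Set.Ici 0) := by
    refine antitoneOn_of_deriv_nonpos (convex_Ici 0)
      (fun t ht => (hderiv t ht).continuousAt.continuousWithinAt) ?_ ?_ <;>
      rw [interior_Ici] <;> intro t ht
    · exact (hderiv t ht.le).differentiableAt.differentiableWithinAt
    · rw [(hderiv t ht.le).deriv]
      exact mul_nonpos_of_nonpos_of_nonneg (by linarith [hle t ht.le]) (Real.exp_pos _).le
  have hbound : ∀ t, 0 ≤ t → f t ≤ f 0 * Real.exp (-(δ * t)) := fun t ht => by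
    have h := hanti Set.self_mem_Ici ht ht
    simp only [mul_zero, Real.exp_zero, mul_one] at h
    rwa [Real.exp_neg, ← div_eq_mul_inv, le_div_iff₀ (Real.exp_pos _)]
  have hlim : Tendsto (fun t => f 0 * Real.exp (-(δ * t))) atTop (𝓝 0) := by
    simpa using (Real.tendsto_exp_neg_atTop_nhds_zero.comp
      (tendsto_id.const_mul_atTop hδ)).const_mul (f 0)
  exact tendsto_of_tendsto_of_tendsto_of_le_of_le' tendsto_const_nhds hlim
    ((eventually_ge_atTop 0).mono hnonneg) ((eventually_ge_atTop 0).mono hbound)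

theorem tendsto_zero_of_sq_le {α : Type*} {l : Filter α} {f g : α → ℝ}
    (hg : Tendsto g l (𝓝 0)) (h : ∀ᶠ t in l, f t ^ 2 ≤ g t) : Tendsto f l (𝓝 0) := by
  have hsq : Tendsto (fun t => f t ^ 2) l (𝓝 0) :=
    tendsto_of_tendsto_of_tendsto_of_le_of_le' tendsto_const_nhds hg
      (Eventually.of_forall fun t => sq_nonneg (f t)) h
  have habs : Tendsto (fun t => |f t|) l (𝓝 0) := by
    simpa [Real.sqrt_sq_eq_abs] using hsq.sqrt
  exact (tendsto_zero_iff_abs_tendsto_zero f).2 habs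

/-- A strict quadratic Lyapunov function for `x''' + A x'' + B x' + B x = 0`, written in the
coordinates `a = x''`, `u = x + x'`, `v = x'`. -/
noncomputable def lyapunov (A B ε a u v : ℝ) : ℝ :=
  (a ^ 2 + B * u ^ 2 + 2 * a * v + A * v ^ 2) / 2 + ε * (a * u - u * v)

theorem exists_lyapunov_bounds {A B : ℝ} (hA : 1 < A) (hB : 0 < B) :
    ∃ ε c δ : ℝ, 0 < c ∧ 0 < δ ∧ ∀ a u v : ℝ,
      c * (a ^ 2 + u ^ 2 + v ^ 2) ≤ lyapunov A B ε a u v ∧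
      -(A - 1) * a ^ 2 + ε * (a ^ 2 - (A + 1) * (a * u) - B * u ^ 2 - v ^ 2) ≤
        -δ * lyapunov A B ε a u v := by
  have hA' : 0 < A - 1 := sub_pos.2 hA
  obtain ⟨n, hn, hnA, hnB⟩ : ∃ n : ℝ, 0 < n ∧ 2 * n * (A + 1) ≤ A - 1 ∧ 2 * n ≤ B := by
    refine ⟨min ((A - 1) / (2 * (A + 1))) (B / 2), by positivity, ?_, ?_⟩
    · have h := min_le_left ((A - 1) / (2 * (A + 1))) (B / 2)
      rw [le_div_iff₀ (by positivity)] at h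
      linarith
    · linarith [min_le_right ((A - 1) / (2 * (A + 1))) (B / 2)]
  obtain ⟨ε, hε, hεn, hεA⟩ : ∃ ε : ℝ, 0 < ε ∧ 2 * ε ≤ n ∧
      ε * (2 * B + (A + 1) ^ 2) ≤ (A - 1) * B := by
    refine ⟨min (n / 2) ((A - 1) * B / (2 * B + (A + 1) ^ 2)), by positivity, ?_, ?_⟩
    · linarith [min_le_left (n / 2) ((A - 1) * B / (2 * B + (A + 1) ^ 2))]
    · rw [← le_div_iff₀ (by positivity)]
      exact min_le_right _ _
  obtain ⟨d, hd, hdA, hdB, hdε⟩ : ∃ d : ℝ, 0 < d ∧ 2 * d ≤ A - 1 ∧ 2 * d ≤ ε * B ∧ d ≤ ε := by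
    refine ⟨min ((A - 1) / 2) (min (ε * B / 2) ε), by positivity, ?_, ?_, ?_⟩
    · linarith [min_le_left ((A - 1) / 2) (min (ε * B / 2) ε)]
    · linarith [min_le_right ((A - 1) / 2) (min (ε * B / 2) ε), min_le_left (ε * B / 2) ε]
    · linarith [min_le_right ((A - 1) / 2) (min (ε * B / 2) ε), min_le_right (ε * B / 2) ε]
  have hC : 0 < 1 + A + B + ε := by linarith
  refine ⟨ε, n / 2, d / (1 + A + B + ε), by positivity, by positivity, fun a u v => ?_⟩
  have hcross : ε * |a * u - u * v| ≤ ε * (a ^ 2 + u ^ 2 + v ^ 2) := by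
    refine mul_le_mul_of_nonneg_left (abs_le.2 ⟨?_, ?_⟩) hε.le <;>
      nlinarith [sq_nonneg (a + u), sq_nonneg (a - u), sq_nonneg (u + v), sq_nonneg (u - v),
        sq_nonneg a, sq_nonneg v]
  have habs : |ε * (a * u - u * v)| ≤ ε * (a ^ 2 + u ^ 2 + v ^ 2) := by
    rwa [abs_mul, abs_of_pos hε]
  obtain ⟨hlo, hhi⟩ := abs_le.1 habs
  have hq : 0 ≤ a ^ 2 + u ^ 2 + v ^ 2 := by positivity
  have hεq := mul_le_mul_of_nonneg_right hεn hq
  have hBu := mul_le_mul_of_nonneg_right hnB (sq_nonneg u)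
  constructor
  · have hav : 2 * n * (a ^ 2 + v ^ 2) ≤ a ^ 2 + 2 * a * v + A * v ^ 2 := by
      have h : (A + 1) * (2 * n * (a ^ 2 + v ^ 2)) ≤
          (A + 1) * (a ^ 2 + 2 * a * v + A * v ^ 2) := by
        have h₁ := mul_le_mul_of_nonneg_right hnA (by positivity : 0 ≤ a ^ 2 + v ^ 2)
        -- the difference is `2 a² + 2 (A + 1) a v + (A² + 1) v²`
        nlinarith [sq_nonneg (2 * a + (A + 1) * v), sq_nonneg ((A - 1) * v)]
      exact le_of_mul_le_mul_left h (by linarith)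
    unfold lyapunov
    linarith
  · have hup : lyapunov A B ε a u v ≤ (1 + A + B + ε) * (a ^ 2 + u ^ 2 + v ^ 2) := by
      unfold lyapunov
      nlinarith [sq_nonneg (a - v), sq_nonneg a, sq_nonneg u, sq_nonneg v,
        mul_nonneg hB.le (sq_nonneg a), mul_nonneg hB.le (sq_nonneg u),
        mul_nonneg hB.le (sq_nonneg v), mul_nonneg hA'.le (sq_nonneg a),
        mul_nonneg hA'.le (sq_nonneg u), mul_nonneg hA'.le (sq_nonneg v)]
    have hdec : -(A - 1) * a ^ 2 + ε * (a ^ 2 - (A + 1) * (a * u) - B * u ^ 2 - v ^ 2) ≤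
        -d * (a ^ 2 + u ^ 2 + v ^ 2) := by
      have hau : ε * (a ^ 2 - (A + 1) * (a * u) - B * u ^ 2 / 2) ≤ (A - 1) / 2 * a ^ 2 := by
        refine le_of_mul_le_mul_left (a := 2 * B) ?_ (by positivity)
        nlinarith [mul_nonneg hε.le (sq_nonneg ((A + 1) * a + B * u)),
          mul_le_mul_of_nonneg_right hεA (sq_nonneg a)]
      nlinarith [mul_le_mul_of_nonneg_right hdA (sq_nonneg a),
        mul_le_mul_of_nonneg_right hdB (sq_nonneg u),
        mul_le_mul_of_nonneg_right hdε (sq_nonneg v)]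
    have hscale := mul_le_mul_of_nonneg_left hup (div_pos hd hC).le
    rw [← mul_assoc, div_mul_cancel₀ _ hC.ne'] at hscale
    linarith

/-- Asymptotic stability of `x''' + A x'' + B x' + B x = 0` for `A > 1`, `B > 0`. -/
theorem tendsto_zero_of_third_order {A B : ℝ} (hA : 1 < A) (hB : 0 < B) {x v a : ℝ → ℝ}
    (hx : ∀ t, 0 ≤ t → HasDerivAt x (v t) t) (hv : ∀ t, 0 ≤ t → HasDerivAt v (a t) t)
    (ha : ∀ t, 0 ≤ t → HasDerivAt a (-A * a t - B * (x t + v t)) t) :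
    Tendsto x atTop (𝓝 0) ∧ Tendsto v atTop (𝓝 0) ∧ Tendsto a atTop (𝓝 0) := by
  obtain ⟨ε, c, δ, hc, hδ, hbounds⟩ := exists_lyapunov_bounds hA hB
  have hW : Tendsto (fun t => lyapunov A B ε (a t) (x t + v t) (v t)) atTop (𝓝 0) := by
    refine tendsto_zero_of_hasDerivAt_le_neg_mul hδ (fun t ht => ?_)
      (fun t _ => (hbounds (a t) (x t + v t) (v t)).2)
      (fun t _ => le_trans (by positivity) (hbounds (a t) (x t + v t) (v t)).1)
    have hu := (hx t ht).add (hv t ht)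
    have hv' := hv t ht
    have ha' := ha t ht
    have hquad := ((((ha'.pow 2).add ((hu.pow 2).const_mul B)).add
      ((ha'.const_mul 2).mul hv')).add ((hv'.pow 2).const_mul A)).div_const 2
    refine (hquad.add (((ha'.mul hu).sub (hu.mul hv')).const_mul ε)).congr_deriv ?_
    simp only [Pi.add_apply]
    ring
  have hWc : Tendsto (fun t => lyapunov A B ε (a t) (x t + v t) (v t) / c) atTop (𝓝 0) := by
    simpa using hW.div_const c
  have hle : ∀ t, a t ^ 2 + (x t + v t) ^ 2 + v t ^ 2 ≤
      lyapunov A B ε (a t) (x t + v t) (v t) / c := fun t => by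
    rw [le_div_iff₀ hc, mul_comm]
    exact (hbounds _ _ _).1
  have hu0 : Tendsto (fun t => x t + v t) atTop (𝓝 0) :=
    tendsto_zero_of_sq_le hWc (Eventually.of_forall fun t => by
      linarith [hle t, sq_nonneg (a t), sq_nonneg (v t)])
  have hv0 : Tendsto v atTop (𝓝 0) :=
    tendsto_zero_of_sq_le hWc (Eventually.of_forall fun t => by
      linarith [hle t, sq_nonneg (a t), sq_nonneg (x t + v t)])
  have ha0 : Tendsto a atTop (𝓝 0) :=
    tendsto_zero_of_sq_le hWc (Eventually.of_forall fun t => by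
      linarith [hle t, sq_nonneg (v t), sq_nonneg (x t + v t)])
  exact ⟨by simpa using hu0.sub hv0, hv0, ha0⟩

/-- Static linear policy under a constant disturbance `w ≠ 0`: the closed loop
`p' = v`, `v' = a`, `a' = (-a + k (r - (p + v + a)))/ς + w` with `ς > 0`,
`k > 0`, `1 + k > ς` satisfies `(p, v, a) → (r + ς w / k, 0, 0)` as `t → ∞`;
in particular the tracking error `e = r - (p + v + a)` converges to the
nonzero value `-ς w / k`, so the static policy fails to reject the
disturbance. -/
theorem stmt_15 (ς k r w : ℝ) (hς : 0 < ς) (hk : 0 < k) (hkς : 1 + k > ς)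
    (hw : w ≠ 0)
    (p v a : ℝ → ℝ)
    (hp : Differentiable ℝ p) (hv : Differentiable ℝ v) (ha : Differentiable ℝ a)
    (hpv : ∀ t, 0 ≤ t → deriv p t = v t)
    (hva : ∀ t, 0 ≤ t → deriv v t = a t)
    (hcl : ∀ t, 0 ≤ t →
      deriv a t = (-a t + k * (r - (p t + v t + a t))) / ς + w) :
    Tendsto (fun t => (p t, v t, a t)) atTop (𝓝 (r + ς * w / k, 0, 0)) ∧
    Tendsto (fun t => r - (p t + v t + a t)) atTop (𝓝 (-(ς * w / k))) ∧
    -(ς * w / k) ≠ 0 := by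
  have hA : 1 < (1 + k) / ς := (one_lt_div hς).2 hkς
  obtain ⟨hx0, hv0, ha0⟩ := tendsto_zero_of_third_order hA (div_pos hk hς)
    (x := fun t => p t - (r + ς * w / k)) (v := v) (a := a)
    (fun t ht => by simpa [hpv t ht] using (hp t).hasDerivAt.sub_const (r + ς * w / k))
    (fun t ht => by simpa [hva t ht] using (hv t).hasDerivAt)
    (fun t ht => by
      refine (ha t).hasDerivAt.congr_deriv ?_
      rw [hcl t ht]
      field_simp
      ring)
  have hp0 : Tendsto p atTop (𝓝 (r + ς * w / k)) := by
    simpa using hx0.add_const (r + ς * w / k)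
  refine ⟨hp0.prodMk_nhds (hv0.prodMk_nhds ha0), ?_, ?_⟩
  · convert ((hp0.add hv0).add ha0).const_sub r using 2
    ring
  · exact neg_ne_zero.2 (div_ne_zero (mul_ne_zero hς.ne' hw) hk.ne')
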